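/- Let X ∈ ℝ^{n×p} have full column rank on index set A ⊆ {1,…,p}, and let β̂ with support A satisfy the LASSO KKT conditions for (X, y, λ): X_Aᵀ(y − X_A β̂_A) = λ·sign(β̂_A) and ‖X_{A^c}ᵀ(y − X β̂)‖_∞ ≤ λ. Then ‖X β̂‖² ≤ ‖X_A(X_AᵀX_A)^{-1}X_Aᵀ y‖², i.e., the norm of the LASSO fit is at most the norm of the least-squares fit onto the active columns. -/

import Mathlib

open Matrix

/-!
The fit `f = X *ᵥ βhat` lies in the column span of the active columns, so its inner product with
the residual `y - f` is unchanged when `y` is replaced by its projection `g` onto that span. The KKT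
conditions make this inner product equal to `lam * ∑ j ∈ A, |βhat j| ≥ 0`, and `0 ≤ ⟪f, g - f⟫`
forces `‖f‖ ≤ ‖g‖`.
-/

section CommRing

variable {m k R : Type*} [Fintype m] [Fintype k] [DecidableEq k] [CommRing R]

/-- The hat matrix of a design matrix `B`, that is, the orthogonal projection onto the column span
of `B` which sends a response to its least-squares fit. It is meaningful only if the Gram matrix
`Bᵀ * B` is invertible, since otherwise the inverse is `0` by convention. -/
noncomputable def hatMatrix (B : Matrix m k R) : Matrix m m R :=
  B * (Bᵀ * B)⁻¹ * Bᵀ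

theorem transpose_mul_hatMatrix (B : Matrix m k R) (hB : IsUnit (Bᵀ * B).det) :
    Bᵀ * hatMatrix B = Bᵀ := by
  rw [hatMatrix, ← Matrix.mul_assoc, ← Matrix.mul_assoc, mul_nonsing_inv _ hB, Matrix.one_mul]

theorem mulVec_dotProduct_hatMatrix_mulVec (B : Matrix m k R) (hB : IsUnit (Bᵀ * B).det)
    (b : k → R) (y : m → R) : (B *ᵥ b) ⬝ᵥ (hatMatrix B *ᵥ y) = (B *ᵥ b) ⬝ᵥ y :=
  calc
    (B *ᵥ b) ⬝ᵥ (hatMatrix B *ᵥ y) = b ⬝ᵥ Bᵀ *ᵥ (hatMatrix B *ᵥ y) := by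
      rw [dotProduct_transpose_mulVec, dotProduct_comm]
    _ = b ⬝ᵥ Bᵀ *ᵥ y := by rw [mulVec_mulVec, transpose_mul_hatMatrix B hB]
    _ = (B *ᵥ b) ⬝ᵥ y := by rw [dotProduct_transpose_mulVec, dotProduct_comm]

end CommRing

theorem submatrix_mulVec_comp_of_injective {m k l R : Type*} [Fintype k] [Fintype l]
    [NonUnitalNonAssocSemiring R] (X : Matrix m l R) {e : k → l} (he : Function.Injective e)
    {v : l → R} (hv : ∀ j, j ∉ Set.range e → v j = 0) :
    X.submatrix id e *ᵥ (v ∘ e) = X *ᵥ v := by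
  ext i
  exact Fintype.sum_of_injective e he _ _ (fun j hj => by rw [hv j hj, mul_zero]) fun _ => rfl

section OrderedRing

variable {m k R : Type*} [Fintype m] [CommRing R] [LinearOrder R] [IsStrictOrderedRing R]

theorem sum_sq_le_sum_sq_of_dotProduct_sub_nonneg {f g : m → R} (h : 0 ≤ f ⬝ᵥ (g - f)) :
    ∑ i, f i ^ 2 ≤ ∑ i, g i ^ 2 := by
  have expand : ∑ i, g i ^ 2 = ∑ i, f i ^ 2 + 2 * (f ⬝ᵥ (g - f)) + ∑ i, (g i - f i) ^ 2 := by
    simp only [dotProduct, Pi.sub_apply, Finset.mul_sum, ← Finset.sum_add_distrib]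
    exact Finset.sum_congr rfl fun i _ => by ring
  have dist_nonneg : 0 ≤ ∑ i, (g i - f i) ^ 2 := Finset.sum_nonneg fun i _ => sq_nonneg _
  linarith

theorem sum_sq_mulVec_le_sum_sq_hatMatrix_mulVec [Fintype k] [DecidableEq k]
    (B : Matrix m k R) (hB : IsUnit (Bᵀ * B).det) (b : k → R) (y : m → R)
    (h : 0 ≤ b ⬝ᵥ Bᵀ *ᵥ (y - B *ᵥ b)) :
    ∑ i, (B *ᵥ b) i ^ 2 ≤ ∑ i, (hatMatrix B *ᵥ y) i ^ 2 := by
  apply sum_sq_le_sum_sq_of_dotProduct_sub_nonneg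
  rwa [dotProduct_sub, mulVec_dotProduct_hatMatrix_mulVec B hB, ← dotProduct_sub, dotProduct_comm,
    ← dotProduct_transpose_mulVec]

end OrderedRing

theorem dotProduct_nonneg_of_eq_mul_sign {k : Type*} [Fintype k] {b c : k → ℝ} {lam : ℝ}
    (hlam : 0 ≤ lam) (hc : ∀ j, c j = lam * Real.sign (b j)) : 0 ≤ b ⬝ᵥ c := by
  refine Finset.sum_nonneg fun j _ => ?_
  rw [hc, mul_comm, mul_assoc]
  exact mul_nonneg hlam (Real.sign_mul_nonneg (b j))

theorem lasso_fit_le_least_squares_fit_general {m l : Type*} [Fintype m] [Fintype l]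
    [DecidableEq l] (X : Matrix m l ℝ) (y : m → ℝ) (lam : ℝ) (hlam : 0 ≤ lam) (A : Finset l)
    (βhat : l → ℝ) (hsupp : ∀ j, j ∉ A → βhat j = 0)
    (XA : Matrix m {j // j ∈ A} ℝ) (hXA : XA = X.submatrix id (fun j => j.val))
    (hrank : IsUnit (XAᵀ * XA).det)
    (hkkt : ∀ j : {j // j ∈ A}, (XAᵀ *ᵥ (y - X *ᵥ βhat)) j = lam * Real.sign (βhat j.val)) :
    ∑ i, (X *ᵥ βhat) i ^ 2 ≤ ∑ i, (hatMatrix XA *ᵥ y) i ^ 2 := by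
  have fit_eq : XA *ᵥ (βhat ∘ Subtype.val) = X *ᵥ βhat := by
    rw [hXA]
    exact submatrix_mulVec_comp_of_injective X Subtype.val_injective fun j hj =>
      hsupp j fun hjA => hj ⟨⟨j, hjA⟩, rfl⟩
  rw [← fit_eq] at hkkt ⊢
  exact sum_sq_mulVec_le_sum_sq_hatMatrix_mulVec XA hrank _ y
    (dotProduct_nonneg_of_eq_mul_sign hlam hkkt)

/-- The squared norm of the LASSO fit is at most that of the least-squares fit onto the
active columns. -/
theorem lasso_fit_le_least_squares_fit {n p : ℕ}
    (X : Matrix (Fin n) (Fin p) ℝ) (y : Fin n → ℝ) (lam : ℝ) (hlam : 0 < lam)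
    (A : Finset (Fin p)) (βhat : Fin p → ℝ)
    (hsupp : ∀ j, j ∉ A → βhat j = 0)
    (XA : Matrix (Fin n) {j // j ∈ A} ℝ) (hXA : XA = X.submatrix id (fun j => j.val))
    (hrank : IsUnit (XAᵀ * XA).det)
    (hkkt : ∀ j : {j // j ∈ A},
      (XAᵀ.mulVec (y - X.mulVec βhat)) j = lam * Real.sign (βhat j.val))
    (hdual : ∀ j, j ∉ A → |(Xᵀ.mulVec (y - X.mulVec βhat)) j| ≤ lam) :
    (∑ i, (X.mulVec βhat i)^2) ≤
      ∑ i, ((XA * (XAᵀ * XA)⁻¹ * XAᵀ).mulVec y i)^2 := by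
  exact lasso_fit_le_least_squares_fit_general X y lam hlam.le A βhat hsupp XA hXA hrank hkkt
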